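/- Let D ≥ 2, L ≥ 1 be integers, K = L^D, and for each N ≥ 1 let ρ_N be the pushforward of the product Haar measure on U(N) gauge configurations under the normalized Wilson action t. Then for every fixed even l ≥ 2, N^l ∫ t^l dρ_N(t) converges, as N → ∞, to (l−1)!! · (D(D−1)/(4K))^{l/2}. -/

import Mathlib

open MeasureTheory Matrix Finset Filter
open scoped Nat

noncomputable section

/-- Borel measurable structure on the unitary group `U(N)`. -/
instance (N : ℕ) : MeasurableSpace (Matrix.unitaryGroup (Fin N) ℂ) := borel _

instance (N : ℕ) : BorelSpace (Matrix.unitaryGroup (Fin N) ℂ) := ⟨rfl⟩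

/-- Sites of the `D`-dimensional periodic lattice of side `L`: the discrete torus `(ℤ/Lℤ)^D`. -/
abbrev Site (D L : ℕ) := Fin D → ZMod L

/-- Edges: a site together with a positive coordinate direction. -/
abbrev Edge (D L : ℕ) := Site D L × Fin D

/-- Lattice gauge configurations: a unitary matrix `U_{x,μ} ∈ U(N)` on every edge. -/
abbrev Conf (D L N : ℕ) := Edge D L → Matrix.unitaryGroup (Fin N) ℂ

/-- The site displaced one step from `x` in direction `μ`. -/
def shift {D L : ℕ} (x : Site D L) (μ : Fin D) : Site D L :=
  Function.update x μ (x μ + 1)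

/-- The normalized Wilson action
`t(U) = (1/K) Σ_x Σ_{μ<ν} (1/N) Re Tr (U_{x,ν}† U_{x+ν,μ}† U_{x+μ,ν} U_{x,μ})`, with `K = L^D`. -/
def wilsonAction (D L N : ℕ) [NeZero L] (U : Conf D L N) : ℝ :=
  ((L : ℝ) ^ D)⁻¹ *
    ∑ x : Site D L, ∑ p ∈ Finset.univ.filter (fun p : Fin D × Fin D => p.1 < p.2),
      (N : ℝ)⁻¹ *
        (Matrix.trace ((U (x, p.2) : Matrix (Fin N) (Fin N) ℂ)ᴴ
          * (U (shift x p.2, p.1) : Matrix (Fin N) (Fin N) ℂ)ᴴ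
          * (U (shift x p.1, p.2) : Matrix (Fin N) (Fin N) ℂ)
          * (U (x, p.1) : Matrix (Fin N) (Fin N) ℂ))).re

/-- The product over all edges of the measure `haarU` on `U(N)`. -/
def confMeasure (D L N : ℕ) [NeZero L]
    (haarU : Measure (Matrix.unitaryGroup (Fin N) ℂ)) : Measure (Conf D L N) :=
  Measure.pi fun _ => haarU

/-!
Left translations of a single edge variable preserve Haar measure, so the mean of the derivative of
any function of the gauge field along them vanishes. Applied to the entries of a Wilson loop `W`
times a product `Q` of loops this gives the loop equation: `N · E[W Q]` is, up to sign, the sum of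
the terms in which `W` splits in two at a repeated letter and of those in which `W` merges with a
loop of `Q`. Splitting and merging do not increase the total length, and a trivial loop, which
counts as a factor `N`, appears only when the length drops; iterating the loop equation therefore
shows that products of nontrivial loops have bounded expectation as `N → ∞`.

Let `S` be the sum of all oriented plaquette loops, which is `2 K N t`. In the loop equation for
`S ^ (k + 2)` the only trivial loop comes from merging a plaquette with its own inverse. Every other
term is bounded, so `E[S ^ (k + 2)] = (k + 1) · K D (D - 1) · E[S ^ k] + O(1 / N)`: the moments of
`S` satisfy the Gaussian recursion in the limit.
-/

open Asymptotics MvPolynomial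
open scoped Matrix.Norms.L2Operator

section Cuts

variable {α M : Type*} [DecidableEq α] [AddCommMonoid M]

/-- The ways of cutting a word at an occurrence of the letter `y`, recorded as the pairs formed by
the prefix and the suffix around that occurrence. -/
def cuts (y : α) : List α → Finset (List α × List α)
  | [] => ∅
  | z :: w => (if z = y then {([], w)} else ∅) ∪ (cuts y w).image fun p => (z :: p.1, p.2)

lemma mem_cuts {y : α} {w : List α} {p : List α × List α} :
    p ∈ cuts y w ↔ w = p.1 ++ y :: p.2 := by
  induction w generalizing p with
  | nil => simp [cuts]
  | cons z w ih =>
    obtain ⟨_ | ⟨a, as⟩, b⟩ := p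
    · by_cases hz : z = y <;> simp [cuts, hz, eq_comm (a := w)]
    · by_cases hz : z = y <;> simp [cuts, hz, ih, eq_comm, and_comm]

lemma sum_cuts_cons (y z : α) (w : List α) (f : List α × List α → M) :
    ∑ p ∈ cuts y (z :: w), f p =
      (if z = y then f ([], w) else 0) + ∑ p ∈ cuts y w, f (z :: p.1, p.2) := by
  rw [cuts, Finset.sum_union, Finset.sum_image]
  · split_ifs <;> simp
  · rintro ⟨a, b⟩ - ⟨c, d⟩ - h
    simpa using h
  · split_ifs <;> simp [Finset.disjoint_left]

end Cuts

section HaarMeasure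

instance unitaryGroup_compactSpace {n : Type*} [Fintype n] [DecidableEq n] :
    CompactSpace (Matrix.unitaryGroup n ℂ) := by
  have : ProperSpace (Matrix n n ℂ) := FiniteDimensional.proper ℂ _
  refine isCompact_iff_compactSpace.mp (Metric.isCompact_of_isClosed_isBounded isClosed_unitary ?_)
  refine (Metric.isBounded_closedBall (x := (0 : Matrix n n ℂ)) (r := 1)).subset fun A hA => ?_
  rw [mem_closedBall_zero_iff]
  rcases subsingleton_or_nontrivial (Matrix n n ℂ) with _ | _
  · simp [Subsingleton.elim A 0]
  · exact (CStarRing.norm_of_mem_unitary hA).le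

lemma isMulRightInvariant_of_isHaarMeasure {G : Type*} [Group G] [TopologicalSpace G]
    [IsTopologicalGroup G] [LocallyCompactSpace G] [MeasurableSpace G] [BorelSpace G]
    (μ : Measure G) [μ.IsHaarMeasure] [IsProbabilityMeasure μ] : μ.IsMulRightInvariant := by
  refine ⟨fun g => ?_⟩
  have : IsProbabilityMeasure (μ.map (· * g)) :=
    Measure.isProbabilityMeasure_map (measurable_mul_const g).aemeasurable
  exact Measure.isHaarMeasure_eq_of_isProbabilityMeasure _ μ

lemma integrable_of_continuous {X F : Type*} [TopologicalSpace X] [CompactSpace X]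
    [MeasurableSpace X] [OpensMeasurableSpace X] [NormedAddCommGroup F] (μ : Measure X)
    [IsFiniteMeasureOnCompacts μ] {f : X → F} (hf : Continuous f) : Integrable f μ :=
  hf.integrable_of_hasCompactSupport (HasCompactSupport.of_compactSpace f)

end HaarMeasure

section Flow

variable {X F : Type*} [TopologicalSpace X] [NormedAddCommGroup F] [NormedSpace ℝ F]
  {Φ : Flow ℝ X} {f f' : X → F}

lemma hasDerivAt_flow (h : ∀ u, HasDerivAt (fun t => f (Φ t u)) (f' u) 0) (u : X) (t : ℝ) :
    HasDerivAt (fun t => f (Φ t u)) (f' (Φ t u)) t := by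
  have h0 := h (Φ t u)
  rw [← sub_self t] at h0
  refine (h0.comp_sub_const t t).congr_of_eventuallyEq (Eventually.of_forall fun s => ?_)
  simp only [← Flow.map_add, sub_add_cancel]

lemma integral_eq_zero_of_hasDerivAt_flow [CompactSpace X] [MeasurableSpace X]
    [OpensMeasurableSpace X] (μ : Measure X) [IsFiniteMeasure μ]
    (hΦ : ∀ t, MeasurePreserving (Φ t) μ μ) (hf : Continuous f) (hf' : Continuous f')
    (h : ∀ u, HasDerivAt (fun t => f (Φ t u)) (f' u) 0) : ∫ u, f' u ∂μ = 0 := by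
  obtain ⟨C, hC⟩ := (isCompact_range hf').isBounded.exists_norm_le
  have hderiv := (hasDerivAt_integral_of_dominated_loc_of_deriv_le (μ := μ) (x₀ := 0)
    (F := fun t u => f (Φ t u)) (F' := fun t u => f' (Φ t u)) (s := Set.univ) (bound := fun _ => C)
    univ_mem
    (Eventually.of_forall fun t => (integrable_of_continuous μ
      (hf.comp (Φ.continuous_toFun t))).aestronglyMeasurable)
    (integrable_of_continuous μ (hf.comp (Φ.continuous_toFun 0)))
    (integrable_of_continuous μ (hf'.comp (Φ.continuous_toFun 0))).aestronglyMeasurable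
    (Eventually.of_forall fun u t _ => hC _ ⟨_, rfl⟩) (integrable_const C)
    (Eventually.of_forall fun u t _ => hasDerivAt_flow h u t)).2
  have hconst (t : ℝ) : ∫ u, f (Φ t u) ∂μ = ∫ u, f u ∂μ := by
    rw [← integral_map (hΦ t).aemeasurable, (hΦ t).map_eq]
    exact (integrable_of_continuous _ hf).aestronglyMeasurable
  simp only [hconst, Flow.map_zero_apply] at hderiv
  exact hderiv.unique (hasDerivAt_const _ _)

end Flow

section ExpUnitary

variable {A : Type*} [NormedRing A] [NormedAlgebra ℂ A] [StarRing A] [ContinuousStar A]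
  [CompleteSpace A] [StarModule ℂ A]

lemma hasDerivAt_expUnitary (H : selfAdjoint A) :
    HasDerivAt (fun θ : ℝ => (selfAdjoint.expUnitary (θ • H) : A)) (Complex.I • (H : A)) 0 := by
  have h := hasDerivAt_exp_smul_const (𝕂 := ℝ) (Complex.I • (H : A)) 0
  simp only [zero_smul, NormedSpace.exp_zero, one_mul] at h
  refine h.congr_of_eventuallyEq (Eventually.of_forall fun θ => ?_)
  simp [smul_comm Complex.I θ]

lemma expUnitary_add_smul (H : selfAdjoint A) (s t : ℝ) :
    selfAdjoint.expUnitary ((s + t) • H) =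
      selfAdjoint.expUnitary (s • H) * selfAdjoint.expUnitary (t • H) := by
  rw [add_smul]
  refine Commute.expUnitary_add ?_
  simp only [selfAdjoint.val_smul]
  exact ((Commute.refl _).smul_left s).smul_right t

lemma expUnitary_smul_inv (H : selfAdjoint A) (t : ℝ) :
    (selfAdjoint.expUnitary (t • H))⁻¹ = selfAdjoint.expUnitary (t • -H) := by
  rw [inv_eq_iff_mul_eq_one, smul_neg, ← neg_smul, ← expUnitary_add_smul]
  simp

end ExpUnitary

section LetterTranslate

variable {E G : Type*} [Group G]

/-- The letter of the free group inverse to `x`. -/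
abbrev invLetter (x : E × Bool) : E × Bool := (x.1, !x.2)

lemma mk_singleton_invLetter (x : E × Bool) :
    FreeGroup.mk [invLetter x] = (FreeGroup.mk [x])⁻¹ := by
  simp [FreeGroup.inv_mk, FreeGroup.invRev]

variable [DecidableEq E]

/-- The change of variables which multiplies the value of the letter `x` by `V` on the left and
leaves the other edges fixed; for an inverse letter it acts on the right of the edge variable. -/
def letterTranslate (x : E × Bool) (V : G) (U : E → G) : E → G :=
  if x.2 then Pi.mulSingle x.1 V * U else U * Pi.mulSingle x.1 V⁻¹

@[simp] lemma letterTranslate_one (x : E × Bool) (U : E → G) : letterTranslate x 1 U = U := by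
  unfold letterTranslate
  split_ifs <;> simp

lemma letterTranslate_mul (x : E × Bool) (V W : G) (U : E → G) :
    letterTranslate x (V * W) U = letterTranslate x V (letterTranslate x W U) := by
  unfold letterTranslate
  split_ifs <;> simp [Pi.mulSingle_mul, mul_assoc]

lemma lift_letterTranslate_singleton (x y : E × Bool) (V : G) (U : E → G) :
    FreeGroup.lift (letterTranslate x V U) (FreeGroup.mk [y]) =
      if y = x then V * FreeGroup.lift U (FreeGroup.mk [y])
      else if y = invLetter x then FreeGroup.lift U (FreeGroup.mk [y]) * V⁻¹
      else FreeGroup.lift U (FreeGroup.mk [y]) := by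
  obtain ⟨e, b⟩ := x
  obtain ⟨f, c⟩ := y
  by_cases h : f = e
  · subst h
    cases b <;> cases c <;> simp [letterTranslate, FreeGroup.lift_mk]
  · cases b <;> cases c <;> simp [letterTranslate, FreeGroup.lift_mk, h]

lemma continuous_uncurry_letterTranslate [TopologicalSpace G] [IsTopologicalGroup G]
    (x : E × Bool) : Continuous fun p : G × (E → G) => letterTranslate x p.1 p.2 := by
  have h : Continuous fun V : G => (Pi.mulSingle x.1 V : E → G) :=
    continuous_mulSingle (A := fun _ => G) x.1
  unfold letterTranslate
  split_ifs
  · exact (h.comp continuous_fst).mul continuous_snd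
  · exact continuous_snd.mul (h.comp continuous_fst.inv)

lemma measurePreserving_letterTranslate [MeasurableSpace G] [MeasurableMul G]
    (μ : Measure (E → G)) [μ.IsMulLeftInvariant] [μ.IsMulRightInvariant] (x : E × Bool) (V : G) :
    MeasurePreserving (letterTranslate x V) μ μ := by
  unfold letterTranslate
  split_ifs
  · exact measurePreserving_mul_left μ _
  · exact measurePreserving_mul_right μ _

/-- The flow on configurations which perturbs the letter `x` by the one-parameter group
generated by `i H`. -/
def letterFlow {A : Type*} [NormedRing A] [NormedAlgebra ℂ A] [StarRing A] [ContinuousStar A]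
    [CompleteSpace A] [StarModule ℂ A] (x : E × Bool) (H : selfAdjoint A) :
    Flow ℝ (E → unitary A) where
  toFun θ := letterTranslate x (selfAdjoint.expUnitary (θ • H))
  cont' := (continuous_uncurry_letterTranslate x).comp
    (((selfAdjoint.continuous_expUnitary.comp (continuous_id.smul continuous_const)).comp
      continuous_fst).prodMk continuous_snd)
  map_add' s t U := by rw [expUnitary_add_smul, letterTranslate_mul]
  map_zero' U := by rw [zero_smul, selfAdjoint.expUnitary_zero, letterTranslate_one]

end LetterTranslate

section Loops

variable {E : Type*} {N : ℕ}

/-- A `U(N)` gauge field on the edge set `E`. -/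
abbrev GaugeField (E : Type*) (N : ℕ) := E → Matrix.unitaryGroup (Fin N) ℂ

/-- The parallel transport along a word in the edges and their inverses, as a matrix. -/
def wordMat (U : GaugeField E N) (w : List (E × Bool)) : Matrix (Fin N) (Fin N) ℂ :=
  (FreeGroup.lift U (FreeGroup.mk w) : Matrix.unitaryGroup (Fin N) ℂ)

/-- The Wilson loop of an element of the free group on the edges. -/
def loopTrace (U : GaugeField E N) (g : FreeGroup E) : ℂ :=
  Matrix.trace (FreeGroup.lift U g : Matrix (Fin N) (Fin N) ℂ)

@[simp] lemma wordMat_nil (U : GaugeField E N) : wordMat U [] = 1 := by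
  simp [wordMat, ← FreeGroup.one_eq_mk]

lemma wordMat_append (U : GaugeField E N) (v w : List (E × Bool)) :
    wordMat U (v ++ w) = wordMat U v * wordMat U w := by
  simp [wordMat, ← FreeGroup.mul_mk]

lemma wordMat_cons (U : GaugeField E N) (y : E × Bool) (w : List (E × Bool)) :
    wordMat U (y :: w) = wordMat U [y] * wordMat U w :=
  wordMat_append U [y] w

lemma trace_wordMat (U : GaugeField E N) (w : List (E × Bool)) :
    (wordMat U w).trace = loopTrace U (FreeGroup.mk w) := rfl

@[simp] lemma loopTrace_one (U : GaugeField E N) : loopTrace U 1 = N := by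
  simp [loopTrace]

lemma loopTrace_mul_comm (U : GaugeField E N) (g h : FreeGroup E) :
    loopTrace U (g * h) = loopTrace U (h * g) := by
  simpa [loopTrace] using Matrix.trace_mul_comm _ _

lemma loopTrace_conj (U : GaugeField E N) (g h : FreeGroup E) :
    loopTrace U (g * h * g⁻¹) = loopTrace U h := by
  rw [loopTrace_mul_comm, inv_mul_cancel_left]

lemma loopTrace_inv (U : GaugeField E N) (g : FreeGroup E) :
    loopTrace U g⁻¹ = (starRingEnd ℂ) (loopTrace U g) := by
  rw [loopTrace, loopTrace, map_inv, Matrix.UnitaryGroup.inv_val, Matrix.star_eq_conjTranspose,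
    Matrix.trace_conjTranspose]
  rfl

lemma norm_loopTrace_le (U : GaugeField E N) (g : FreeGroup E) : ‖loopTrace U g‖ ≤ N :=
  calc ‖loopTrace U g‖ ≤ ∑ i, ‖(FreeGroup.lift U g : Matrix (Fin N) (Fin N) ℂ) i i‖ :=
        norm_sum_le Finset.univ fun i => (FreeGroup.lift U g : Matrix (Fin N) (Fin N) ℂ) i i
    _ ≤ ∑ _i : Fin N, (1 : ℝ) :=
        Finset.sum_le_sum fun i _ => entry_norm_bound_of_unitary (FreeGroup.lift U g).2 i i
    _ = N := by simp

lemma continuous_freeGroup_lift {G : Type*} [Group G] [TopologicalSpace G] [IsTopologicalGroup G]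
    (g : FreeGroup E) : Continuous fun U : E → G => FreeGroup.lift U g := by
  induction g using FreeGroup.induction_on with
  | C1 => simpa using continuous_const
  | of e => simpa using continuous_apply e
  | inv_of e h => simp only [map_inv]; exact h.inv
  | mul g h hg hh => simp only [map_mul]; exact hg.mul hh

lemma continuous_wordMat (w : List (E × Bool)) :
    Continuous fun U : GaugeField E N => wordMat U w :=
  continuous_subtype_val.comp (continuous_freeGroup_lift _)

lemma continuous_loopTrace (g : FreeGroup E) :
    Continuous fun U : GaugeField E N => loopTrace U g :=
  (continuous_subtype_val.comp (continuous_freeGroup_lift g)).matrix_trace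

lemma continuous_eval_loopTrace (P : MvPolynomial (FreeGroup E) ℂ) :
    Continuous fun U : GaugeField E N => eval (loopTrace U) P :=
  (MvPolynomial.continuous_eval P).comp (continuous_pi continuous_loopTrace)

end Loops

section LetterDerivative

variable {E : Type*} {N : ℕ} [DecidableEq E]

/-- The derivative of `wordMat U w` in the direction `X` when the value of the letter `x` is
perturbed by left multiplication with `1 + X`: `X` is inserted before every `x` and `-X` after
every inverse of `x`. -/
def wordDeriv (x : E × Bool) (U : GaugeField E N) (w : List (E × Bool)) :
    Matrix (Fin N) (Fin N) ℂ →ₗ[ℂ] Matrix (Fin N) (Fin N) ℂ :=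
  ∑ p ∈ cuts x w, LinearMap.mulLeftRight ℂ (wordMat U p.1, wordMat U (x :: p.2)) -
    ∑ p ∈ cuts (invLetter x) w,
      LinearMap.mulLeftRight ℂ (wordMat U (p.1 ++ [invLetter x]), wordMat U p.2)

lemma wordDeriv_apply (x : E × Bool) (U : GaugeField E N) (w : List (E × Bool))
    (X : Matrix (Fin N) (Fin N) ℂ) :
    wordDeriv x U w X = ∑ p ∈ cuts x w, wordMat U p.1 * X * wordMat U (x :: p.2) -
      ∑ p ∈ cuts (invLetter x) w, wordMat U (p.1 ++ [invLetter x]) * X * wordMat U p.2 := by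
  simp [wordDeriv, LinearMap.mulLeftRight_apply]

lemma wordDeriv_cons (x y : E × Bool) (U : GaugeField E N) (w : List (E × Bool))
    (X : Matrix (Fin N) (Fin N) ℂ) :
    wordDeriv x U (y :: w) X =
      ((if y = x then X * wordMat U [y] else 0) -
        if y = invLetter x then wordMat U [y] * X else 0) * wordMat U w +
      wordMat U [y] * wordDeriv x U w X := by
  simp only [wordDeriv_apply, sum_cuts_cons, List.cons_append, wordMat_cons U y (_ ++ _),
    wordMat_cons U y (Prod.fst _), mul_sub, Finset.mul_sum, sub_mul, mul_assoc]
  rw [add_sub_add_comm]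
  congr 2
  · split_ifs with h <;> simp [h, wordMat_cons U x w, mul_assoc]
  · split_ifs with h <;> simp [h, mul_assoc]

lemma continuous_wordDeriv (x : E × Bool) (w : List (E × Bool)) (X : Matrix (Fin N) (Fin N) ℂ) :
    Continuous fun U : GaugeField E N => wordDeriv x U w X := by
  simp only [wordDeriv_apply]
  refine (continuous_finsetSum _ fun p _ => ?_).sub (continuous_finsetSum _ fun p _ => ?_)
  all_goals exact ((continuous_wordMat _).mul continuous_const).mul (continuous_wordMat _)

lemma hasDerivAt_wordMat_singleton (x y : E × Bool) (U : GaugeField E N)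
    (H : selfAdjoint (Matrix (Fin N) (Fin N) ℂ)) :
    HasDerivAt (fun θ : ℝ => wordMat (letterFlow x H θ U) [y])
      ((if y = x then (Complex.I • (H : Matrix (Fin N) (Fin N) ℂ)) * wordMat U [y] else 0) -
        if y = invLetter x then wordMat U [y] * (Complex.I • (H : Matrix (Fin N) (Fin N) ℂ))
        else 0) 0 := by
  have hflow (θ : ℝ) : letterFlow x H θ U =
    letterTranslate x (selfAdjoint.expUnitary (θ • H)) U := rfl
  simp only [wordMat, hflow, lift_letterTranslate_singleton, expUnitary_smul_inv]
  split_ifs with h₁ h₂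
  · exact absurd (h₁.symm.trans h₂) (by simp [Prod.ext_iff])
  · simpa using (hasDerivAt_expUnitary H).mul_const _
  · simpa using (hasDerivAt_expUnitary (-H)).const_mul _
  · simpa using hasDerivAt_const _ _

lemma hasDerivAt_wordMat (x : E × Bool) (U : GaugeField E N)
    (H : selfAdjoint (Matrix (Fin N) (Fin N) ℂ)) (w : List (E × Bool)) :
    HasDerivAt (fun θ : ℝ => wordMat (letterFlow x H θ U) w)
      (wordDeriv x U w (Complex.I • (H : Matrix (Fin N) (Fin N) ℂ))) 0 := by
  induction w with
  | nil => simpa [wordDeriv, cuts] using hasDerivAt_const (0 : ℝ) _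
  | cons y w ih =>
    simp only [wordMat_cons _ y w, wordDeriv_cons]
    simpa using (hasDerivAt_wordMat_singleton x y U H).fun_mul ih

/-- The function `DF` is the derivative of `F` under infinitesimal left translations of the letter
`x`. It is given on all matrices, although only skew-Hermitian directions are tangent to `U(N)`. -/
structure HasLetterDeriv (x : E × Bool) (F : GaugeField E N → ℂ)
    (DF : GaugeField E N → Matrix (Fin N) (Fin N) ℂ →ₗ[ℂ] ℂ) : Prop where
  continuous : Continuous F
  continuous_deriv : ∀ X, Continuous fun U => DF U X
  hasDerivAt : ∀ U (H : selfAdjoint (Matrix (Fin N) (Fin N) ℂ)),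
    HasDerivAt (fun θ => F (letterFlow x H θ U))
      (DF U (Complex.I • (H : Matrix (Fin N) (Fin N) ℂ))) 0

namespace HasLetterDeriv

variable {x : E × Bool} {F G : GaugeField E N → ℂ}
  {DF DG : GaugeField E N → Matrix (Fin N) (Fin N) ℂ →ₗ[ℂ] ℂ}

lemma const (x : E × Bool) (c : ℂ) :
    HasLetterDeriv x (fun _ : GaugeField E N => c) (fun _ => 0) where
  continuous := continuous_const
  continuous_deriv _ := continuous_const
  hasDerivAt _ _ := hasDerivAt_const _ _

lemma add (hF : HasLetterDeriv x F DF) (hG : HasLetterDeriv x G DG) :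
    HasLetterDeriv x (fun U => F U + G U) (fun U => DF U + DG U) where
  continuous := hF.continuous.add hG.continuous
  continuous_deriv X := (hF.continuous_deriv X).add (hG.continuous_deriv X)
  hasDerivAt U H := (hF.hasDerivAt U H).fun_add (hG.hasDerivAt U H)

lemma mul (hF : HasLetterDeriv x F DF) (hG : HasLetterDeriv x G DG) :
    HasLetterDeriv x (fun U => F U * G U) (fun U => F U • DG U + G U • DF U) where
  continuous := hF.continuous.mul hG.continuous
  continuous_deriv X := (hF.continuous.mul (hG.continuous_deriv X)).add
    (hG.continuous.mul (hF.continuous_deriv X))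
  hasDerivAt U H := by
    refine ((hF.hasDerivAt U H).fun_mul (hG.hasDerivAt U H)).congr_deriv ?_
    simp only [Flow.map_zero_apply, LinearMap.add_apply, LinearMap.smul_apply, smul_eq_mul]
    ring

lemma comp_wordMat (x : E × Bool) (w : List (E × Bool)) (ψ : Matrix (Fin N) (Fin N) ℂ →ₗ[ℂ] ℂ) :
    HasLetterDeriv x (fun U => ψ (wordMat U w)) (fun U => ψ ∘ₗ wordDeriv x U w) where
  continuous := ψ.continuous_of_finiteDimensional.comp (continuous_wordMat w)
  continuous_deriv X := ψ.continuous_of_finiteDimensional.comp (continuous_wordDeriv x w X)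
  hasDerivAt U H :=
    (ψ.toContinuousLinearMap.restrictScalars ℝ).hasFDerivAt.comp_hasDerivAt (0 : ℝ)
      (hasDerivAt_wordMat x U H w)

variable [Countable E] (μ : Measure (GaugeField E N)) [IsFiniteMeasure μ] [μ.IsMulLeftInvariant]
  [μ.IsMulRightInvariant]

lemma integral_selfAdjoint_eq_zero (hF : HasLetterDeriv x F DF)
    (H : selfAdjoint (Matrix (Fin N) (Fin N) ℂ)) : ∫ U, DF U H ∂μ = 0 := by
  have h : ∫ U, DF U (Complex.I • (H : Matrix (Fin N) (Fin N) ℂ)) ∂μ = 0 :=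
    integral_eq_zero_of_hasDerivAt_flow μ
      (fun θ => measurePreserving_letterTranslate μ x (selfAdjoint.expUnitary (θ • H)))
      hF.continuous (hF.continuous_deriv _) fun U => hF.hasDerivAt U H
  simpa [integral_const_mul] using h

lemma integral_eq_zero (hF : HasLetterDeriv x F DF) (X : Matrix (Fin N) (Fin N) ℂ) :
    ∫ U, DF U X ∂μ = 0 := by
  have hint (Y : Matrix (Fin N) (Fin N) ℂ) : Integrable (fun U => DF U Y) μ :=
    integrable_of_continuous μ (hF.continuous_deriv Y)
  rw [← realPart_add_I_smul_imaginaryPart X]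
  simp only [map_add, map_smul, smul_eq_mul]
  rw [integral_add (hint _) ((hint _).const_mul _), integral_const_mul,
    hF.integral_selfAdjoint_eq_zero μ, hF.integral_selfAdjoint_eq_zero μ, mul_zero, add_zero]

end HasLetterDeriv

end LetterDerivative

section LoopEquation

variable {E : Type*} {N : ℕ}

lemma sum_mul_single_mul_apply {n R : Type*} [Fintype n] [DecidableEq n] [CommSemiring R]
    (A B : Matrix n n R) :
    ∑ i : n, ∑ j : n, (A * Matrix.single i j 1 * B : Matrix n n R) i j = A.trace * B.trace := by
  simp [Matrix.mul_apply, Matrix.single_apply, Matrix.trace, Finset.sum_mul_sum, ite_and]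

/-- The expectation of a polynomial in the Wilson loops. -/
def loopMean [Countable E] (μ : Measure (GaugeField E N)) [IsFiniteMeasure μ] :
    MvPolynomial (FreeGroup E) ℂ →ₗ[ℂ] ℂ where
  toFun P := ∫ U, eval (loopTrace U) P ∂μ
  map_add' P Q := by
    simp only [map_add]
    exact integral_add (integrable_of_continuous μ (continuous_eval_loopTrace P))
      (integrable_of_continuous μ (continuous_eval_loopTrace Q))
  map_smul' c P := by simp [smul_eval, integral_const_mul]

lemma loopMean_apply [Countable E] (μ : Measure (GaugeField E N)) [IsFiniteMeasure μ]
    (P : MvPolynomial (FreeGroup E) ℂ) : loopMean μ P = ∫ U, eval (loopTrace U) P ∂μ :=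
  rfl

lemma loopMean_X_one_mul [Countable E] (μ : Measure (GaugeField E N)) [IsFiniteMeasure μ]
    (P : MvPolynomial (FreeGroup E) ℂ) : loopMean μ (X 1 * P) = N * loopMean μ P := by
  simp [loopMean, integral_const_mul]

variable [DecidableEq E]

/-- The derivation of the algebra of loop polynomials which merges the loop `g` into the other
loops: `g` is inserted into a loop before every occurrence of the letter `x`, with sign `+`, and
after every occurrence of its inverse, with sign `-`. -/
def mergeDeriv (x : E × Bool) (g : FreeGroup E) :
    Derivation ℂ (MvPolynomial (FreeGroup E) ℂ) (MvPolynomial (FreeGroup E) ℂ) :=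
  mkDerivation ℂ fun h =>
    ∑ p ∈ cuts x h.toWord, X (FreeGroup.mk p.1 * g * FreeGroup.mk (x :: p.2)) -
      ∑ p ∈ cuts (invLetter x) h.toWord,
        X (FreeGroup.mk (p.1 ++ [invLetter x]) * g * FreeGroup.mk p.2)

/-- The pairs of loops into which the word `x :: w` splits at a further occurrence of the letter `x`
(with sign `+`) or of its inverse (with sign `-`). -/
def splitting (x : E × Bool) (w : List (E × Bool)) : MvPolynomial (FreeGroup E) ℂ :=
  ∑ p ∈ cuts x w, X (FreeGroup.mk (x :: p.1)) * X (FreeGroup.mk (x :: p.2)) -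
    ∑ p ∈ cuts (invLetter x) w, X (FreeGroup.mk p.1) * X (FreeGroup.mk p.2)

lemma sum_wordDeriv_single (x : E × Bool) (U : GaugeField E N) (w : List (E × Bool)) :
    ∑ i, ∑ j, wordDeriv x U w (Matrix.single i j 1) i j =
      ∑ p ∈ cuts x w, loopTrace U (FreeGroup.mk p.1) * loopTrace U (FreeGroup.mk (x :: p.2)) -
        ∑ p ∈ cuts (invLetter x) w,
          loopTrace U (FreeGroup.mk (p.1 ++ [invLetter x])) * loopTrace U (FreeGroup.mk p.2) := by
  simp only [wordDeriv_apply, Matrix.sub_apply, Matrix.sum_apply, Finset.sum_sub_distrib,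
    Finset.sum_comm (s := Finset.univ) (t := cuts _ _), sum_mul_single_mul_apply, trace_wordMat]

lemma sum_wordDeriv_cons_single (x : E × Bool) (U : GaugeField E N) (w : List (E × Bool)) :
    ∑ i, ∑ j, wordDeriv x U (x :: w) (Matrix.single i j 1) i j =
      N * loopTrace U (FreeGroup.mk (x :: w)) + eval (loopTrace U) (splitting x w) := by
  have hconj (v : List (E × Bool)) :
      loopTrace U (FreeGroup.mk (x :: (v ++ [invLetter x]))) = loopTrace U (FreeGroup.mk v) := by
    rw [← List.cons_append, ← List.singleton_append, ← FreeGroup.mul_mk,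
      ← FreeGroup.mul_mk, mk_singleton_invLetter, loopTrace_conj]
  rw [sum_wordDeriv_single, sum_cuts_cons, sum_cuts_cons, if_pos rfl,
    if_neg (by simp [Prod.ext_iff])]
  simp [splitting, hconj, ← FreeGroup.one_eq_mk, add_sub_assoc]

lemma trace_wordDeriv_wordMat (x : E × Bool) (U : GaugeField E N) (w : List (E × Bool))
    (h : FreeGroup E) :
    (wordDeriv x U h.toWord (wordMat U w)).trace =
      eval (loopTrace U) (mergeDeriv x (FreeGroup.mk w) (X h)) := by
  simp [wordDeriv_apply, mergeDeriv, ← wordMat_append, trace_wordMat, Matrix.trace_sum]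

lemma exists_hasLetterDeriv_eval (x : E × Bool) (Q : MvPolynomial (FreeGroup E) ℂ) :
    ∃ DQ, HasLetterDeriv x (fun U : GaugeField E N => eval (loopTrace U) Q) DQ ∧
      ∀ U w, DQ U (wordMat U w) = eval (loopTrace U) (mergeDeriv x (FreeGroup.mk w) Q) := by
  induction Q using MvPolynomial.induction_on with
  | C c => exact ⟨_, by simpa using HasLetterDeriv.const x c, by simp⟩
  | add P Q hP hQ =>
    obtain ⟨DP, hP, hDP⟩ := hP
    obtain ⟨DQ, hQ, hDQ⟩ := hQ
    exact ⟨_, by simpa using hP.add hQ, by simp [hDP, hDQ]⟩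
  | mul_X P h hP =>
    obtain ⟨DP, hP, hDP⟩ := hP
    have hX := HasLetterDeriv.comp_wordMat (N := N) x h.toWord (Matrix.traceLinearMap (Fin N) ℂ ℂ)
    refine ⟨_, by simpa [trace_wordMat, FreeGroup.mk_toWord] using hP.mul hX, fun U w => ?_⟩
    simp [hDP, trace_wordDeriv_wordMat]

theorem loop_equation [Countable E] (μ : Measure (GaugeField E N)) [IsFiniteMeasure μ]
    [μ.IsMulLeftInvariant] [μ.IsMulRightInvariant] (x : E × Bool) (w : List (E × Bool))
    (Q : MvPolynomial (FreeGroup E) ℂ) :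
    N * loopMean μ (X (FreeGroup.mk (x :: w)) * Q) + loopMean μ (splitting x w * Q) +
      loopMean μ (mergeDeriv x (FreeGroup.mk (x :: w)) Q) = 0 := by
  obtain ⟨DQ, hQ, hDQ⟩ := exists_hasLetterDeriv_eval (N := N) x Q
  set D : Fin N → Fin N → GaugeField E N → ℂ := fun i j U =>
    wordMat U (x :: w) i j * DQ U (Matrix.single i j 1) +
      eval (loopTrace U) Q * wordDeriv x U (x :: w) (Matrix.single i j 1) i j
  have hentry (i j : Fin N) := (HasLetterDeriv.comp_wordMat x (x :: w)
    (Matrix.entryLinearMap ℂ ℂ i j)).mul hQ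
  have hsum (U : GaugeField E N) : ∑ i, ∑ j, D i j U =
      eval (loopTrace U) ((N : ℂ) • (X (FreeGroup.mk (x :: w)) * Q) + splitting x w * Q +
        mergeDeriv x (FreeGroup.mk (x :: w)) Q) := by
    have hW : ∑ i, ∑ j, wordMat U (x :: w) i j * DQ U (Matrix.single i j 1) =
        DQ U (wordMat U (x :: w)) := by
      conv_rhs => rw [Matrix.matrix_eq_sum_single (wordMat U (x :: w))]
      simp only [map_sum]
      simp_rw [← smul_eq_mul, ← map_smul, Matrix.smul_single, smul_eq_mul, mul_one]
    simp only [D, Finset.sum_add_distrib, hW, hDQ, ← Finset.mul_sum, sum_wordDeriv_cons_single,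
      map_add, smul_eval, map_mul, eval_X]
    ring
  calc
    _ = ∫ U, ∑ i, ∑ j, D i j U ∂μ := by
      simp_rw [hsum, ← loopMean_apply, map_add, map_smul, smul_eq_mul]
    _ = ∑ i, ∑ j, ∫ U, D i j U ∂μ := by
      have hD (i j : Fin N) : Integrable (D i j) μ :=
        integrable_of_continuous μ ((hentry i j).continuous_deriv _)
      rw [integral_finsetSum _ fun i _ => integrable_finsetSum _ fun j _ => hD i j]
      exact Finset.sum_congr rfl fun i _ => integral_finsetSum _ fun j _ => hD i j
    _ = 0 := Finset.sum_eq_zero fun i _ => Finset.sum_eq_zero fun j _ =>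
      (hentry i j).integral_eq_zero μ _

end LoopEquation

section UniformBounds

variable {E : Type*}

lemma isBigO_of_mem_span {ι 𝕜 V F : Type*} [NormedField 𝕜] [AddCommGroup V] [Module 𝕜 V]
    [NormedAddCommGroup F] [NormedSpace 𝕜 F] {l : Filter ι} {T : ι → V →ₗ[𝕜] F} {S : Set V}
    {g : ι → ℝ} (hS : ∀ v ∈ S, (fun i => T i v) =O[l] g) {v : V} (hv : v ∈ Submodule.span 𝕜 S) :
    (fun i => T i v) =O[l] g := by
  induction hv using Submodule.span_induction with
  | mem v hv => exact hS v hv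
  | zero => simpa using isBigO_zero g l
  | add v w _ _ hv hw => simpa using hv.add hw
  | smul c v _ hv => simpa only [map_smul] using! hv.const_smul_left c

lemma isBigO_natCast_pow_of_le {a b : ℕ} (h : a ≤ b) :
    (fun n : ℕ => (n : ℝ) ^ a) =O[atTop] fun n => (n : ℝ) ^ b :=
  IsBigO.pow_of_le_right (tendsto_natCast_atTop_atTop.eventually_ge_atTop 1) h

lemma isBigO_of_natCast_mul {f : ℕ → ℂ} {g : ℕ → ℝ}
    (h : (fun n : ℕ => (n : ℂ) * f n) =O[atTop] fun n => (n : ℝ) * g n) : f =O[atTop] g := by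
  obtain ⟨c, hc⟩ := h.bound
  refine IsBigO.of_bound c ?_
  filter_upwards [hc, eventually_gt_atTop 0] with n hn hpos
  refine le_of_mul_le_mul_left ?_ (Nat.cast_pos.mpr hpos : (0 : ℝ) < n)
  simpa [mul_left_comm] using hn

/-- The product of the Wilson loops in a multiset. -/
def loopProd (s : Multiset (FreeGroup E)) : MvPolynomial (FreeGroup E) ℂ := (s.map X).prod

@[simp] lemma loopProd_zero : loopProd (0 : Multiset (FreeGroup E)) = 1 := rfl

lemma loopProd_cons (g : FreeGroup E) (s : Multiset (FreeGroup E)) :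
    loopProd (g ::ₘ s) = X g * loopProd s := by
  simp [loopProd]

lemma loopProd_add (s t : Multiset (FreeGroup E)) :
    loopProd (s + t) = loopProd s * loopProd t := by
  simp [loopProd]

lemma norm_eval_loopProd_le {N : ℕ} (U : GaugeField E N) (s : Multiset (FreeGroup E)) :
    ‖eval (loopTrace U) (loopProd s)‖ ≤ (N : ℝ) ^ s.card := by
  induction s using Multiset.induction_on with
  | empty => simp
  | cons g s ih =>
    rw [loopProd_cons, map_mul, eval_X, norm_mul, Multiset.card_cons, pow_succ']
    exact mul_le_mul (norm_loopTrace_le U g) ih (norm_nonneg _) N.cast_nonneg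

lemma norm_loopMean_loopProd_le [Countable E] {N : ℕ} (μ : Measure (GaugeField E N))
    [IsProbabilityMeasure μ] (s : Multiset (FreeGroup E)) :
    ‖loopMean μ (loopProd s)‖ ≤ (N : ℝ) ^ s.card := by
  simpa [loopMean_apply] using norm_integral_le_of_norm_le_const (μ := μ)
    (ae_of_all μ fun U => norm_eval_loopProd_le U s)

lemma mk_ne_one_of_isReduced {w : List (E × Bool)} (hred : FreeGroup.IsReduced w) (hne : w ≠ []) :
    FreeGroup.mk w ≠ 1 := by
  classical
  rwa [Ne, ← FreeGroup.toWord_eq_nil_iff, FreeGroup.toWord_mk, hred.reduce_eq]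

variable [DecidableEq E]

/-- The total number of letters in a multiset of loops. -/
def totalLength (s : Multiset (FreeGroup E)) : ℕ := (s.map FreeGroup.norm).sum

@[simp] lemma totalLength_zero : totalLength (0 : Multiset (FreeGroup E)) = 0 := rfl

@[simp] lemma totalLength_cons (g : FreeGroup E) (s : Multiset (FreeGroup E)) :
    totalLength (g ::ₘ s) = g.norm + totalLength s := by
  simp [totalLength]

@[simp] lemma totalLength_add (s t : Multiset (FreeGroup E)) :
    totalLength (s + t) = totalLength s + totalLength t := by
  simp [totalLength]

lemma card_le_count_one_add_totalLength (s : Multiset (FreeGroup E)) :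
    s.card ≤ s.count 1 + totalLength s := by
  induction s using Multiset.induction_on with
  | empty => simp
  | cons g s ih =>
    have hg : g ≠ 1 → 0 < g.norm := fun h => Nat.pos_of_ne_zero (mt FreeGroup.norm_eq_zero.mp h)
    rw [Multiset.card_cons, Multiset.count_cons, totalLength_cons]
    split_ifs with h
    · omega
    · have := hg (Ne.symm h)
      omega

/-- The span of the products of loops which have total length at most `n` and contain at most `c`
trivial loops, where one further trivial loop is allowed if the total length is less than `n`. -/
def boundedProducts (E : Type*) [DecidableEq E] (n c : ℕ) :
    Submodule ℂ (MvPolynomial (FreeGroup E) ℂ) :=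
  Submodule.span ℂ (loopProd ''
    {s | totalLength s ≤ n ∧ s.count 1 ≤ c ∨ totalLength s < n ∧ s.count 1 ≤ c + 1})

lemma loopProd_cons_mem_boundedProducts {g : FreeGroup E} {s : Multiset (FreeGroup E)} {k n c : ℕ}
    (hk : 0 < k) (hg : g.norm ≤ k) (hn : k + totalLength s ≤ n) (hc : s.count 1 ≤ c) :
    loopProd (g ::ₘ s) ∈ boundedProducts E n c := by
  refine Submodule.subset_span (Set.mem_image_of_mem _ ?_)
  rw [Set.mem_ofPred_eq, totalLength_cons, Multiset.count_cons]
  split_ifs with h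
  · have : g.norm = 0 := FreeGroup.norm_eq_zero.mpr h.symm
    omega
  · omega

lemma splitting_mul_loopProd_mem {x : E × Bool} {w : List (E × Bool)}
    (hred : FreeGroup.IsReduced (x :: w)) (s : Multiset (FreeGroup E)) :
    splitting x w * loopProd s ∈
      boundedProducts E (w.length + 1 + totalLength s) (s.count 1) := by
  have hprod {a b : List (E × Bool)} {k : ℕ} (ha : a ≠ []) (hinfix : a <:+: x :: w)
      (hk : 0 < k) (hb : b.length ≤ k) (hlen : k + a.length ≤ w.length + 1) :
      X (FreeGroup.mk a) * X (FreeGroup.mk b) * loopProd s ∈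
        boundedProducts E (w.length + 1 + totalLength s) (s.count 1) := by
    have hne := mk_ne_one_of_isReduced (hred.infix hinfix) ha
    have hnorm := FreeGroup.norm_mk_le (L₁ := a)
    rw [mul_comm (X _), mul_assoc, ← loopProd_cons, ← loopProd_cons]
    refine loopProd_cons_mem_boundedProducts hk (FreeGroup.norm_mk_le.trans hb) ?_ ?_
    · rw [totalLength_cons]
      omega
    · rw [Multiset.count_cons_of_ne hne.symm]
  rw [splitting, sub_mul, Finset.sum_mul, Finset.sum_mul]
  refine Submodule.sub_mem _ (Submodule.sum_mem _ fun ⟨a, b⟩ hp => ?_)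
    (Submodule.sum_mem _ fun ⟨a, b⟩ hp => ?_) <;> obtain rfl := mem_cuts.mp hp
  · refine hprod (List.cons_ne_nil x a) ⟨[], x :: b, by simp⟩ b.length.succ_pos le_rfl ?_
    simp only [List.length_cons, List.length_append]
    omega
  · have ha : a ≠ [] := by
      rintro rfl
      simpa using (FreeGroup.isReduced_cons_cons.mp hred).1
    refine hprod ha ⟨[x], invLetter x :: b, by simp⟩ b.length.succ_pos b.length.le_succ ?_
    simp only [List.length_cons, List.length_append]
    omega

lemma mergeDeriv_X_mul_loopProd_mem (x : E × Bool) (g h : FreeGroup E)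
    {s : Multiset (FreeGroup E)} {n c : ℕ} (hn : h.norm + g.norm + totalLength s ≤ n)
    (hc : s.count 1 ≤ c) : mergeDeriv x g (X h) * loopProd s ∈ boundedProducts E n c := by
  have hprod {a b : List (E × Bool)} {y : E × Bool} (hy : h.toWord = a ++ y :: b)
      {a' b' : List (E × Bool)} (hlen : a'.length + b'.length = h.norm) :
      X (FreeGroup.mk a' * g * FreeGroup.mk b') * loopProd s ∈ boundedProducts E n c := by
    have hpos : 0 < h.norm := by simp [FreeGroup.norm, hy]
    rw [← loopProd_cons]
    refine loopProd_cons_mem_boundedProducts (by omega) ?_ hn hc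
    have h₁ := FreeGroup.norm_mul_le (FreeGroup.mk a' * g) (FreeGroup.mk b')
    have h₂ := FreeGroup.norm_mul_le (FreeGroup.mk a') g
    have ha := FreeGroup.norm_mk_le (L₁ := a')
    have hb := FreeGroup.norm_mk_le (L₁ := b')
    omega
  simp only [mergeDeriv, mkDerivation_X, sub_mul, Finset.sum_mul]
  refine Submodule.sub_mem _ (Submodule.sum_mem _ fun p hp => ?_)
    (Submodule.sum_mem _ fun p hp => ?_) <;> rw [mem_cuts] at hp
  all_goals exact hprod hp (by grind [FreeGroup.norm])

lemma mergeDeriv_loopProd_mem (x : E × Bool) (g : FreeGroup E) {s r : Multiset (FreeGroup E)}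
    {n c : ℕ} (hn : totalLength s + g.norm + totalLength r ≤ n) (hc : (s + r).count 1 ≤ c) :
    mergeDeriv x g (loopProd s) * loopProd r ∈ boundedProducts E n c := by
  induction s using Multiset.induction_on generalizing r with
  | empty => simp
  | cons h s ih =>
    have hleibniz : mergeDeriv x g (loopProd (h ::ₘ s)) * loopProd r =
        mergeDeriv x g (loopProd s) * loopProd (h ::ₘ r) +
          mergeDeriv x g (X h) * loopProd (s + r) := by
      rw [loopProd_cons, loopProd_cons, loopProd_add, Derivation.leibniz, smul_eq_mul, smul_eq_mul]
      ring
    rw [totalLength_cons] at hn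
    rw [Multiset.cons_add] at hc
    rw [hleibniz]
    refine Submodule.add_mem _ (ih ?_ ?_) (mergeDeriv_X_mul_loopProd_mem x g h ?_ ?_)
    · rw [totalLength_cons]
      omega
    · rwa [Multiset.add_cons]
    · rw [totalLength_add]
      omega
    · exact (Multiset.count_le_count_cons 1 h _).trans hc

lemma isBigO_natCast_mul_loopMean_cons [Countable E] (μ : ∀ N, Measure (GaugeField E N))
    [∀ N, IsFiniteMeasure (μ N)] [∀ N, (μ N).IsMulLeftInvariant] [∀ N, (μ N).IsMulRightInvariant]
    {g : FreeGroup E} (hg : g ≠ 1) (s : Multiset (FreeGroup E)) {f : ℕ → ℝ}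
    (hf : ∀ P ∈ boundedProducts E (totalLength (g ::ₘ s)) (s.count 1),
      (fun N => loopMean (μ N) P) =O[atTop] f) :
    (fun N : ℕ => (N : ℂ) * loopMean (μ N) (loopProd (g ::ₘ s))) =O[atTop] f := by
  obtain ⟨x, w, hw⟩ := List.exists_cons_of_ne_nil (mt FreeGroup.toWord_eq_nil_iff.mp hg)
  have hgw : FreeGroup.mk (x :: w) = g := by rw [← hw, FreeGroup.mk_toWord]
  have hlen : w.length + 1 = g.norm := by simp [FreeGroup.norm, hw]
  have hsplit : splitting x w * loopProd s ∈
      boundedProducts E (totalLength (g ::ₘ s)) (s.count 1) := by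
    rw [totalLength_cons, ← hlen]
    exact splitting_mul_loopProd_mem (hw ▸ FreeGroup.isReduced_toWord) s
  have hmerge : mergeDeriv x g (loopProd s) ∈
      boundedProducts E (totalLength (g ::ₘ s)) (s.count 1) := by
    simpa using mergeDeriv_loopProd_mem x g (s := s) (r := 0) (by simp [add_comm]) (by simp)
  refine (((hf _ hsplit).add (hf _ hmerge)).neg_left).congr_left fun N => ?_
  have hloop := loop_equation (μ N) x w (loopProd s)
  rw [hgw] at hloop
  rw [loopProd_cons]
  linear_combination -hloop

section Bootstrap

variable [Countable E] (μ : ∀ N, Measure (GaugeField E N)) [∀ N, IsProbabilityMeasure (μ N)]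
  [∀ N, (μ N).IsMulLeftInvariant] [∀ N, (μ N).IsMulRightInvariant]

lemma isBigO_loopMean_of_excess_succ {n m : ℕ}
    (hlt : ∀ s : Multiset (FreeGroup E), totalLength s < n →
      (fun N => loopMean (μ N) (loopProd s)) =O[atTop] fun N => (N : ℝ) ^ s.count 1)
    (hle : ∀ s : Multiset (FreeGroup E), totalLength s ≤ n →
      (fun N => loopMean (μ N) (loopProd s)) =O[atTop] fun N => (N : ℝ) ^ (s.count 1 + (m + 1)))
    {s : Multiset (FreeGroup E)} (hs : totalLength s ≤ n) :
    (fun N => loopMean (μ N) (loopProd s)) =O[atTop] fun N => (N : ℝ) ^ (s.count 1 + m) := by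
  by_cases htriv : ∀ g ∈ s, 1 = g
  · refine (IsBigO.of_norm_le fun N => norm_loopMean_loopProd_le (μ N) s).trans
      (isBigO_natCast_pow_of_le ?_)
    rw [Multiset.count_eq_card.mpr htriv]
    exact Nat.le_add_right _ _
  push Not at htriv
  obtain ⟨g, hgs, hg⟩ := htriv
  obtain ⟨s, rfl⟩ := Multiset.exists_cons_of_mem hgs
  rw [Multiset.count_cons_of_ne hg]
  have hmul : (fun N : ℕ => (N : ℂ) * loopMean (μ N) (loopProd (g ::ₘ s))) =O[atTop]
      fun N => (N : ℝ) ^ (s.count 1 + (m + 1)) := by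
    refine isBigO_natCast_mul_loopMean_cons μ hg.symm s fun P hP => isBigO_of_mem_span ?_ hP
    rintro _ ⟨r, ⟨hr, hcount⟩ | ⟨hr, hcount⟩, rfl⟩
    · exact (hle r (hr.trans hs)).trans (isBigO_natCast_pow_of_le (by omega))
    · exact (hlt r (hr.trans_le hs)).trans (isBigO_natCast_pow_of_le (by omega))
  exact isBigO_of_natCast_mul (hmul.congr_right fun N => by ring)

theorem isBigO_loopMean_loopProd (s : Multiset (FreeGroup E)) :
    (fun N => loopMean (μ N) (loopProd s)) =O[atTop] fun N => (N : ℝ) ^ s.count 1 := by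
  induction hn : totalLength s using Nat.strong_induction_on generalizing s with
  | _ n ih =>
    have hdescent (m : ℕ)
        (hm : ∀ r : Multiset (FreeGroup E), totalLength r ≤ n →
          (fun N => loopMean (μ N) (loopProd r)) =O[atTop] fun N => (N : ℝ) ^ (r.count 1 + m)) :
        (fun N => loopMean (μ N) (loopProd s)) =O[atTop] fun N => (N : ℝ) ^ s.count 1 := by
      induction m with
      | zero => exact hm s hn.le
      | succ m ihm =>
        exact ihm fun r hr => isBigO_loopMean_of_excess_succ μ (fun r hr => ih _ hr r rfl) hm hr
    refine hdescent n fun r hr => (IsBigO.of_norm_le fun N =>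
      norm_loopMean_loopProd_le (μ N) r).trans (isBigO_natCast_pow_of_le ?_)
    exact (card_le_count_one_add_totalLength r).trans (by gcongr)

omit [DecidableEq E] in
theorem isBigO_one_loopMean_of_mem_supported {P : MvPolynomial (FreeGroup E) ℂ}
    (hP : P ∈ supported ℂ {(1 : FreeGroup E)}ᶜ) :
    (fun N => loopMean (μ N) P) =O[atTop] fun _ => (1 : ℝ) := by
  classical
  have hspan : P ∈ Submodule.span ℂ (Submonoid.closure
      (X '' {(1 : FreeGroup E)}ᶜ : Set (MvPolynomial (FreeGroup E) ℂ))) := by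
    rwa [← Algebra.adjoin_eq_span, Subalgebra.mem_toSubmodule]
  refine isBigO_of_mem_span (fun Q hQ => ?_) hspan
  obtain ⟨s, hs, rfl⟩ : ∃ s : Multiset (FreeGroup E), s.count 1 = 0 ∧ loopProd s = Q := by
    induction hQ using Submonoid.closure_induction with
    | mem Q hQ =>
      obtain ⟨g, hg, rfl⟩ := hQ
      exact ⟨{g}, by simpa using Ne.symm hg, by simp [loopProd]⟩
    | one => exact ⟨0, by simp, loopProd_zero⟩
    | mul Q R _ _ hQ hR =>
      obtain ⟨s, hs, rfl⟩ := hQ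
      obtain ⟨t, ht, rfl⟩ := hR
      exact ⟨s + t, by simp [hs, ht], loopProd_add s t⟩
  simpa [hs] using isBigO_loopMean_loopProd μ s

end Bootstrap

end UniformBounds

section LoopFamily

variable {E I : Type*}

/-- A family of nontrivial cyclically reduced words which is closed under inversion, by means of the
map `bar`, and in which a rotation of a word is a word of the family only if it is the trivial
rotation. -/
structure IsLoopFamily (w : I → List (E × Bool)) (bar : I → I) : Prop where
  ne_nil : ∀ i, w i ≠ []
  isCyclicallyReduced : ∀ i, FreeGroup.IsCyclicallyReduced (w i)
  inv : ∀ i, w (bar i) = FreeGroup.invRev (w i)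
  eq_of_rotate_eq : ∀ i j n, n < (w j).length → (w j).rotate n = w i → j = i ∧ n = 0

/-- The sum of the Wilson loops of a family of words. -/
def loopSum [Fintype I] (w : I → List (E × Bool)) : MvPolynomial (FreeGroup E) ℂ :=
  ∑ i, X (FreeGroup.mk (w i))

namespace IsLoopFamily

variable {w : I → List (E × Bool)} {bar : I → I} {i j : I} {x : E × Bool} {v a b : List (E × Bool)}

lemma isReduced_rotate (hw : IsLoopFamily w bar) (hj : w j = a ++ b) :
    FreeGroup.IsReduced (b ++ a) := by
  have hred := ((hw.isCyclicallyReduced j).flatten_replicate 2).isReduced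
  exact hred.infix ⟨a, b, by simp [List.replicate, hj]⟩

lemma eq_of_append_comm_eq (hw : IsLoopFamily w bar) (hj : w j = a ++ b) (hi : b ++ a = w i)
    (ha : a ≠ []) : j = i ∧ b = [] := by
  rcases eq_or_ne b [] with rfl | hb
  · have hpos : 0 < (w j).length := List.length_pos_of_ne_nil (hw.ne_nil j)
    exact ⟨(hw.eq_of_rotate_eq i j 0 hpos (by simpa [hj] using hi)).1, rfl⟩
  · have hlt : a.length < (w j).length := by simpa [hj] using List.length_pos_of_ne_nil hb
    have hrot : (w j).rotate a.length = w i := by rw [hj, List.rotate_append_length_eq, hi]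
    exact absurd (hw.eq_of_rotate_eq i j _ hlt hrot).2 (mt List.length_eq_zero_iff.mp ha)

lemma ne_append_singleton_invLetter (hw : IsLoopFamily w bar) (hi : w i = x :: v)
    (u : List (E × Bool)) : w i ≠ u ++ [invLetter x] := by
  intro h
  have hcyc := (FreeGroup.isCyclicallyReduced_iff.mp (hw.isCyclicallyReduced i)).2
  simpa using hcyc (invLetter x) (by simp [h]) x (by simp [hi])

lemma toWord_mk [DecidableEq E] (hw : IsLoopFamily w bar) (i : I) :
    (FreeGroup.mk (w i)).toWord = w i := by
  rw [FreeGroup.toWord_mk, (hw.isCyclicallyReduced i).isReduced.reduce_eq]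

lemma append_eq_of_mul_eq_one (hw : IsLoopFamily w bar) (hj : w j = a ++ b)
    (h : FreeGroup.mk a * FreeGroup.mk (w i) * FreeGroup.mk b = 1) : b ++ a = w (bar i) := by
  classical
  have hinv : FreeGroup.mk (b ++ a) = FreeGroup.mk (w (bar i)) := by
    rw [hw.inv, ← FreeGroup.inv_mk, ← FreeGroup.mul_mk, eq_inv_iff_mul_eq_one,
      mul_assoc]
    exact mul_eq_one_comm.mp h
  rw [← hw.toWord_mk, ← hinv, FreeGroup.toWord_mk, (hw.isReduced_rotate hj).reduce_eq]

lemma mul_mk_mul_ne_one (hw : IsLoopFamily w bar) (hi : w i = x :: v) (hj : w j = a ++ x :: b) :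
    FreeGroup.mk a * FreeGroup.mk (w i) * FreeGroup.mk (x :: b) ≠ 1 := by
  intro h
  have hrot := congrArg FreeGroup.invRev (hw.append_eq_of_mul_eq_one hj h)
  rw [hw.inv, FreeGroup.invRev_invRev] at hrot
  exact hw.ne_append_singleton_invLetter hi (FreeGroup.invRev (b ++ a))
    (by rw [← hrot]; simp [FreeGroup.invRev])

lemma eq_of_mul_mk_mul_eq_one (hw : IsLoopFamily w bar) (hj : w j = a ++ invLetter x :: b)
    (h : FreeGroup.mk (a ++ [invLetter x]) * FreeGroup.mk (w i) * FreeGroup.mk b = 1) :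
    j = bar i ∧ b = [] := by
  have hj : w j = (a ++ [invLetter x]) ++ b := by simp [hj]
  exact hw.eq_of_append_comm_eq hj (hw.append_eq_of_mul_eq_one hj h) (by simp)

lemma loopSum_mem_supported [Fintype I] (hw : IsLoopFamily w bar) :
    loopSum w ∈ supported ℂ {(1 : FreeGroup E)}ᶜ :=
  Subalgebra.sum_mem _ fun i _ => X_mem_supported.mpr
    (mk_ne_one_of_isReduced (hw.isCyclicallyReduced i).isReduced (hw.ne_nil i))

lemma splitting_mem_supported [DecidableEq E] (hw : IsLoopFamily w bar) (hi : w i = x :: v) :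
    splitting x v ∈ supported ℂ {(1 : FreeGroup E)}ᶜ := by
  have hred : FreeGroup.IsReduced (x :: v) := hi ▸ (hw.isCyclicallyReduced i).isReduced
  have hX {u : List (E × Bool)} (hinfix : u <:+: x :: v) (hu : u ≠ []) :
      (X (FreeGroup.mk u) : MvPolynomial (FreeGroup E) ℂ) ∈ supported ℂ {(1 : FreeGroup E)}ᶜ :=
    X_mem_supported.mpr (mk_ne_one_of_isReduced (hred.infix hinfix) hu)
  refine Subalgebra.sub_mem _ (Subalgebra.sum_mem _ fun ⟨a, b⟩ hp => ?_)
    (Subalgebra.sum_mem _ fun ⟨a, b⟩ hp => ?_) <;> obtain rfl := mem_cuts.mp hp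
  · exact Subalgebra.mul_mem _ (hX ⟨[], x :: b, by simp⟩ (List.cons_ne_nil x a))
      (hX ⟨x :: a, [], by simp⟩ (List.cons_ne_nil x b))
  · have ha : a ≠ [] := by
      rintro rfl
      simpa using (FreeGroup.isReduced_cons_cons.mp hred).1
    have hb : b ≠ [] := by
      rintro rfl
      exact hw.ne_append_singleton_invLetter hi (x :: a) hi
    exact Subalgebra.mul_mem _ (hX ⟨[x], invLetter x :: b, by simp⟩ ha)
      (hX ⟨x :: a ++ [invLetter x], [], by simp⟩ hb)

lemma mergeDeriv_X_add_mem_supported [DecidableEq E] [DecidableEq I] (hw : IsLoopFamily w bar)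
    (hi : w i = x :: v) (j : I) : mergeDeriv x (FreeGroup.mk (w i)) (X (FreeGroup.mk (w j))) +
      (if bar i = j then X 1 else 0) ∈ supported ℂ {(1 : FreeGroup E)}ᶜ := by
  simp only [mergeDeriv, mkDerivation_X, hw.toWord_mk]
  rw [sub_add]
  refine Subalgebra.sub_mem _ (Subalgebra.sum_mem _ fun p hp => X_mem_supported.mpr
    (hw.mul_mk_mul_ne_one hi (mem_cuts.mp hp))) ?_
  split_ifs with hij
  · have hbar : w j = FreeGroup.invRev v ++ [invLetter x] := by
      rw [← hij, hw.inv, hi]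
      simp [FreeGroup.invRev]
    have hone : FreeGroup.mk (FreeGroup.invRev v ++ [invLetter x]) * FreeGroup.mk (w i) *
        FreeGroup.mk [] = 1 := by
      rw [← hbar, ← hij, hw.inv, ← FreeGroup.inv_mk, inv_mul_cancel, ← FreeGroup.one_eq_mk, mul_one]
    rw [← Finset.add_sum_erase _ _ (mem_cuts (p := (FreeGroup.invRev v, [])).mpr hbar), hone,
      add_sub_cancel_left]
    refine Subalgebra.sum_mem _ fun ⟨a, b⟩ hp => X_mem_supported.mpr fun h => ?_
    obtain ⟨hne, hp⟩ := Finset.mem_erase.mp hp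
    have hab := mem_cuts.mp hp
    obtain rfl := (hw.eq_of_mul_mk_mul_eq_one hab h).2
    exact hne (by simpa [hbar, eq_comm] using hab)
  · rw [sub_zero]
    exact Subalgebra.sum_mem _ fun p hp => X_mem_supported.mpr fun h =>
      hij (hw.eq_of_mul_mk_mul_eq_one (mem_cuts.mp hp) h).1.symm

lemma mergeDeriv_loopSum_add_mem_supported [DecidableEq E] [Fintype I]
    (hw : IsLoopFamily w bar) (hi : w i = x :: v) :
    mergeDeriv x (FreeGroup.mk (w i)) (loopSum w) + X 1 ∈ supported ℂ {(1 : FreeGroup E)}ᶜ := by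
  classical
  have hsum := Subalgebra.sum_mem _ fun j (_ : j ∈ Finset.univ) =>
    hw.mergeDeriv_X_add_mem_supported hi j
  simpa [Finset.sum_add_distrib, loopSum] using hsum

variable [Countable E] (μ : ∀ N, Measure (GaugeField E N)) [∀ N, IsProbabilityMeasure (μ N)]
  [∀ N, (μ N).IsMulLeftInvariant] [∀ N, (μ N).IsMulRightInvariant] [Fintype I]

lemma isBigO_loopMean_X_mul_loopSum_pow (hw : IsLoopFamily w bar) (i : I) (k : ℕ) :
    (fun N => loopMean (μ N) (X (FreeGroup.mk (w i)) * loopSum w ^ (k + 1)) -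
      (k + 1) * loopMean (μ N) (loopSum w ^ k)) =O[atTop] fun N => (N : ℝ)⁻¹ := by
  classical
  obtain ⟨x, v, hi⟩ := List.exists_cons_of_ne_nil (hw.ne_nil i)
  set R := mergeDeriv x (FreeGroup.mk (w i)) (loopSum w) + X 1 with hR
  set P := splitting x v * loopSum w ^ (k + 1) + (k + 1 : ℂ) • (loopSum w ^ k * R)
  have hS := hw.loopSum_mem_supported
  have hP : P ∈ supported ℂ {(1 : FreeGroup E)}ᶜ :=
    Subalgebra.add_mem _ (Subalgebra.mul_mem _ (hw.splitting_mem_supported hi)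
      (Subalgebra.pow_mem _ hS _)) (Subalgebra.smul_mem _ (Subalgebra.mul_mem _
        (Subalgebra.pow_mem _ hS _) (hw.mergeDeriv_loopSum_add_mem_supported hi)) _)
  have hmerge : mergeDeriv x (FreeGroup.mk (w i)) (loopSum w ^ (k + 1)) =
      (k + 1 : ℂ) • (loopSum w ^ k * R) - (k + 1 : ℂ) • (X 1 * loopSum w ^ k) := by
    rw [Derivation.leibniz_pow, eq_sub_of_add_eq hR.symm]
    simp only [add_tsub_cancel_right, smul_eq_mul, nsmul_eq_mul, Nat.cast_add, Nat.cast_one,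
      smul_eq_C_mul, C_add, map_natCast, C_1]
    ring
  refine isBigO_of_natCast_mul ?_
  refine ((isBigO_one_loopMean_of_mem_supported μ hP).neg_left.congr_left fun N => ?_).trans ?_
  · have hloop := loop_equation (μ N) x v (loopSum w ^ (k + 1))
    rw [← hi, hmerge, map_sub, map_smul _ _ (X 1 * _), loopMean_X_one_mul] at hloop
    simp only [P, map_add, smul_eq_mul] at hloop ⊢
    linear_combination -hloop
  · refine IsBigO.of_bound' ?_
    filter_upwards [eventually_ne_atTop 0] with N hN
    simp [hN]

lemma isBigO_moment_recursion (hw : IsLoopFamily w bar) (k : ℕ) :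
    (fun N => loopMean (μ N) (loopSum w ^ (k + 2)) -
      (k + 1) * Fintype.card I * loopMean (μ N) (loopSum w ^ k)) =O[atTop]
        fun N => (N : ℝ)⁻¹ := by
  refine (IsBigO.fun_sum fun i (_ : i ∈ Finset.univ) =>
    hw.isBigO_loopMean_X_mul_loopSum_pow μ i k).congr_left fun N => ?_
  have hpow : loopSum w ^ (k + 2) = ∑ i, X (FreeGroup.mk (w i)) * loopSum w ^ (k + 1) := by
    rw [pow_succ', ← Finset.sum_mul, loopSum]
  rw [hpow, map_sum, Finset.sum_sub_distrib, Finset.sum_const, Finset.card_univ, nsmul_eq_mul]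
  ring

end IsLoopFamily

lemma tendsto_of_gaussian_recursion {a : ℕ → ℕ → ℂ} {σ : ℂ} (h₀ : ∀ n, a 0 n = 1)
    (h : ∀ k, Tendsto (fun n => a (k + 2) n - (k + 1) * σ * a k n) atTop (nhds 0)) (m : ℕ) :
    Tendsto (a (2 * m)) atTop (nhds ((2 * m - 1)‼ * σ ^ m)) := by
  induction m with
  | zero => simp [funext h₀]
  | succ m ih =>
    have hlim := (h (2 * m)).add (ih.const_mul ((2 * m + 1) * σ))
    rw [show 2 * (m + 1) - 1 = 2 * m + 1 by omega, Nat.doubleFactorial_add_one]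
    convert hlim using 2
    · simp [mul_add]
    · push_cast
      ring

theorem IsLoopFamily.tendsto_even_moment [Countable E] [Fintype I]
    {w : I → List (E × Bool)} {bar : I → I} (hw : IsLoopFamily w bar)
    (μ : ∀ N, Measure (GaugeField E N)) [∀ N, IsProbabilityMeasure (μ N)]
    [∀ N, (μ N).IsMulLeftInvariant] [∀ N, (μ N).IsMulRightInvariant] (m : ℕ) :
    Tendsto (fun N => loopMean (μ N) (loopSum w ^ (2 * m))) atTop
      (nhds ((2 * m - 1)‼ * (Fintype.card I : ℂ) ^ m)) := by
  refine tendsto_of_gaussian_recursion (a := fun k N => loopMean (μ N) (loopSum w ^ k))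
    (fun N => by simp [loopMean_apply]) (fun k => ?_) m
  exact (hw.isBigO_moment_recursion μ k).trans_tendsto tendsto_inv_atTop_nhds_zero_nat

end LoopFamily

section Plaquettes

/-- The word of the plaquette at the site `x` spanned by the directions `p`. -/
def plaquetteWord {D L : ℕ} (x : Site D L) (p : Fin D × Fin D) : List (Edge D L × Bool) :=
  [((x, p.2), false), ((shift x p.2, p.1), false), ((shift x p.1, p.2), true), ((x, p.1), true)]

/-- Oriented plaquettes: a site and an ordered pair of distinct directions. -/
abbrev Plaquette (D L : ℕ) := Site D L × (Finset.univ : Finset (Fin D)).offDiag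

/-- The word of an oriented plaquette. -/
abbrev Plaquette.word {D L : ℕ} (i : Plaquette D L) : List (Edge D L × Bool) :=
  plaquetteWord i.1 i.2

/-- The plaquette with the opposite orientation. -/
def Plaquette.reverse {D L : ℕ} (i : Plaquette D L) : Plaquette D L :=
  (i.1, ⟨i.2.1.swap, by simpa using (Finset.mem_offDiag.mp i.2.2).2.2.symm⟩)

lemma plaquetteWord_swap {D L : ℕ} (x : Site D L) (p : Fin D × Fin D) :
    plaquetteWord x p.swap = FreeGroup.invRev (plaquetteWord x p) := by
  simp [plaquetteWord, FreeGroup.invRev]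

lemma isLoopFamily_plaquette (D L : ℕ) :
    IsLoopFamily (Plaquette.word (D := D) (L := L)) Plaquette.reverse where
  ne_nil _ := by simp [plaquetteWord]
  isCyclicallyReduced i := by
    have h := (Finset.mem_offDiag.mp i.2.2).2.2
    simp [plaquetteWord, FreeGroup.isCyclicallyReduced_iff, h, h.symm]
  inv i := plaquetteWord_swap i.1 i.2
  eq_of_rotate_eq := by
    rintro ⟨x, ⟨⟨a, b⟩, hp⟩⟩ ⟨y, ⟨⟨c, d⟩, hq⟩⟩ n hn hrot
    simp only [plaquetteWord, List.length_cons, List.length_nil] at hn hrot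
    interval_cases n <;> grind [List.rotate_zero, List.rotate_cons_succ]

lemma card_plaquette (D L : ℕ) [NeZero L] :
    (Fintype.card (Plaquette D L) : ℝ) = (L : ℝ) ^ D * (D * (D - 1)) := by
  rw [Fintype.card_prod, Fintype.card_coe, Finset.offDiag_card, Fintype.card_fun, ZMod.card,
    Finset.card_univ, Fintype.card_fin, Nat.cast_mul, Nat.cast_sub (Nat.le_mul_self D)]
  push_cast
  ring

lemma loopTrace_plaquetteWord {D L N : ℕ} (U : Conf D L N) (x : Site D L) (p : Fin D × Fin D) :
    loopTrace U (FreeGroup.mk (plaquetteWord x p)) =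
      Matrix.trace ((U (x, p.2) : Matrix (Fin N) (Fin N) ℂ)ᴴ
          * (U (shift x p.2, p.1) : Matrix (Fin N) (Fin N) ℂ)ᴴ
          * (U (shift x p.1, p.2) : Matrix (Fin N) (Fin N) ℂ)
          * (U (x, p.1) : Matrix (Fin N) (Fin N) ℂ)) := by
  simp [loopTrace, plaquetteWord, mul_assoc, Matrix.star_eq_conjTranspose]

lemma wilsonAction_eq_sum_loopTrace {D L N : ℕ} [NeZero L] (U : Conf D L N) :
    wilsonAction D L N U = ((L : ℝ) ^ D)⁻¹ * ∑ x : Site D L,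
      ∑ p ∈ Finset.univ.filter (fun p : Fin D × Fin D => p.1 < p.2),
        (N : ℝ)⁻¹ * (loopTrace U (FreeGroup.mk (plaquetteWord x p))).re := by
  simp only [wilsonAction, loopTrace_plaquetteWord]

lemma continuous_wilsonAction (D L N : ℕ) [NeZero L] : Continuous (wilsonAction D L N) := by
  rw [show wilsonAction D L N = _ from _root_.funext wilsonAction_eq_sum_loopTrace]
  exact continuous_const.mul (continuous_finsetSum _ fun x _ => continuous_finsetSum _ fun p _ =>
    continuous_const.mul (Complex.continuous_re.comp (continuous_loopTrace _)))

lemma sum_offDiag_eq_sum_lt {α M : Type*} [Fintype α] [LinearOrder α] [AddCommMonoid M]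
    (f : α × α → M) :
    ∑ p ∈ (Finset.univ : Finset α).offDiag, f p =
      ∑ p ∈ Finset.univ.filter (fun p : α × α => p.1 < p.2), (f p + f p.swap) := by
  have hsplit : (Finset.univ : Finset α).offDiag =
      Finset.univ.filter (fun p : α × α => p.1 < p.2) ∪
        Finset.univ.filter (fun p : α × α => p.2 < p.1) := by
    ext p
    simp [lt_or_lt_iff_ne]
  rw [hsplit, Finset.sum_union (Finset.disjoint_filter.mpr fun p _ => lt_asymm),
    Finset.sum_add_distrib]
  congr 1
  exact Finset.sum_equiv (Equiv.prodComm _ _) (by simp) (by simp)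

lemma sum_offDiag_loopTrace_plaquetteWord {D L N : ℕ} (U : Conf D L N) (x : Site D L) :
    ∑ p : (Finset.univ : Finset (Fin D)).offDiag, loopTrace U (FreeGroup.mk (plaquetteWord x p)) =
      ∑ p ∈ Finset.univ.filter (fun p : Fin D × Fin D => p.1 < p.2),
        ((2 * (loopTrace U (FreeGroup.mk (plaquetteWord x p))).re : ℝ) : ℂ) := by
  rw [Finset.sum_coe_sort _ fun p => loopTrace U (FreeGroup.mk (plaquetteWord x p)),
    sum_offDiag_eq_sum_lt]
  refine Finset.sum_congr rfl fun p _ => ?_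
  rw [plaquetteWord_swap, ← FreeGroup.inv_mk, loopTrace_inv, Complex.add_conj]

lemma eval_loopSum_plaquette {D L N : ℕ} [NeZero L] (hN : N ≠ 0) (U : Conf D L N) :
    eval (loopTrace U) (loopSum (Plaquette.word (D := D) (L := L))) =
      ((2 * (L : ℝ) ^ D * (N * wilsonAction D L N U) : ℝ) : ℂ) := by
  have hL : (L : ℝ) ≠ 0 := Nat.cast_ne_zero.mpr (NeZero.ne L)
  have hN : (N : ℝ) ≠ 0 := Nat.cast_ne_zero.mpr hN
  simp only [loopSum, map_sum, eval_X, Fintype.sum_prod_type, sum_offDiag_loopTrace_plaquetteWord,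
    wilsonAction_eq_sum_loopTrace, ← Finset.mul_sum, ← Complex.ofReal_sum]
  congr 1
  field_simp

lemma loopMean_loopSum_plaquette_pow {D L N : ℕ} [NeZero L] (hN : N ≠ 0)
    (μ : Measure (Conf D L N)) [IsFiniteMeasure μ] (l : ℕ) :
    loopMean μ (loopSum (Plaquette.word (D := D) (L := L)) ^ l) =
      (((2 * (L : ℝ) ^ D) ^ l *
        ((N : ℝ) ^ l * ∫ t, t ^ l ∂(μ.map (wilsonAction D L N))) : ℝ) : ℂ) := by
  rw [integral_map (continuous_wilsonAction D L N).measurable.aemeasurable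
    (continuous_pow l).aestronglyMeasurable, ← integral_const_mul, ← integral_const_mul,
    ← integral_complex_ofReal, loopMean_apply]
  simp only [map_pow, eval_loopSum_plaquette hN, mul_pow, ← Complex.ofReal_pow]

instance confMeasure_isProbabilityMeasure {D L N : ℕ} [NeZero L]
    (haarU : Measure (Matrix.unitaryGroup (Fin N) ℂ)) [IsProbabilityMeasure haarU] :
    IsProbabilityMeasure (confMeasure D L N haarU) :=
  inferInstanceAs (IsProbabilityMeasure (Measure.pi fun _ => haarU))

instance confMeasure_isMulLeftInvariant {D L N : ℕ} [NeZero L]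
    (haarU : Measure (Matrix.unitaryGroup (Fin N) ℂ)) [SigmaFinite haarU]
    [haarU.IsMulLeftInvariant] : (confMeasure D L N haarU).IsMulLeftInvariant :=
  inferInstanceAs (Measure.pi fun _ => haarU).IsMulLeftInvariant

instance confMeasure_isMulRightInvariant {D L N : ℕ} [NeZero L]
    (haarU : Measure (Matrix.unitaryGroup (Fin N) ℂ)) [SigmaFinite haarU]
    [haarU.IsMulRightInvariant] : (confMeasure D L N haarU).IsMulRightInvariant :=
  inferInstanceAs (Measure.pi fun _ => haarU).IsMulRightInvariant

end Plaquettes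

/-- **Even moments of the pushforward of Haar measure by the Wilson action.**
With `K = L^D`, for every fixed even `l ≥ 2`, `N^l ∫ t^l dρ_N` converges, as `N → ∞`,
to `(l−1)‼ · (D(D−1)/(4K))^(l/2)`. -/
theorem wilson_even_moment_limit
    (D L : ℕ) [NeZero L] (hD : 2 ≤ D) (hL : 1 ≤ L)
    (haarU : ∀ N : ℕ, Measure (Matrix.unitaryGroup (Fin N) ℂ))
    [∀ N, (haarU N).IsHaarMeasure] [∀ N, IsProbabilityMeasure (haarU N)]
    (l : ℕ) (hl : 2 ≤ l) (hleven : Even l) :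
    Tendsto
      (fun N : ℕ => (N : ℝ) ^ l *
        ∫ t, t ^ l ∂((confMeasure D L N (haarU N)).map (wilsonAction D L N)))
      atTop
      (nhds (((l - 1)‼ : ℝ) * (((D : ℝ) * ((D : ℝ) - 1)) / (4 * L ^ D)) ^ (l / 2))) := by
  obtain ⟨m, rfl⟩ := hleven.exists_two_nsmul l
  rw [smul_eq_mul, Nat.mul_div_cancel_left m two_pos]
  have (N : ℕ) := isMulRightInvariant_of_isHaarMeasure (haarU N)
  have hmoment := (isLoopFamily_plaquette D L).tendsto_even_moment
    (fun N => confMeasure D L N (haarU N)) m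
  have hreal : Tendsto (fun N : ℕ => (2 * (L : ℝ) ^ D) ^ (2 * m) * ((N : ℝ) ^ (2 * m) *
      ∫ t, t ^ (2 * m) ∂((confMeasure D L N (haarU N)).map (wilsonAction D L N)))) atTop
      (nhds ((2 * m - 1)‼ * (Fintype.card (Plaquette D L) : ℝ) ^ m)) := by
    rw [← Filter.tendsto_ofReal_iff]
    push_cast
    refine hmoment.congr' ?_
    filter_upwards [eventually_ne_atTop 0] with N hN
    simpa using loopMean_loopSum_plaquette_pow hN _ _
  have hL0 : (2 * (L : ℝ) ^ D) ≠ 0 := by simp [NeZero.ne L]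
  convert hreal.const_mul ((2 * (L : ℝ) ^ D) ^ (2 * m))⁻¹ using 2
  · rw [inv_mul_cancel_left₀ (pow_ne_zero _ hL0)]
  · rw [card_plaquette, pow_mul, ← inv_pow, mul_left_comm, ← mul_pow]
    congr 2
    field_simp
    norm_num

end
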